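/- arXiv:1511.08041 — 2 statements merged into one kernel-verified Lean document; each statement's English description precedes it below -/
import Mathlib

section
/- Let α > 0 be a non-integer, n ≥ 1, and let V be a real-valued measurable function on ℝⁿ. Then V belongs to the Kato class K_{2α}(ℝⁿ) if and only if lim_{t→0⁺} K_V(t) = 0. -/
open Real MeasureTheory Filter ENNReal
open scoped Classical

/-- The higher order Kato class `K_{2α}(ℝⁿ)`. -/
def katoClass (n : ℕ) (α : ℝ) (V : EuclideanSpace ℝ (Fin n) → ℝ) : Prop :=
  if 2 * α < n then
    Tendsto (fun δ : ℝ => ⨆ x : EuclideanSpace ℝ (Fin n),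
        ∫⁻ y in Metric.ball x δ, ENNReal.ofReal (‖x - y‖ ^ (2 * α - (n : ℝ)) * |V y|))
      (nhdsWithin 0 (Set.Ioi 0)) (nhds 0)
  else if 2 * α = (n : ℝ) then
    Tendsto (fun δ : ℝ => ⨆ x : EuclideanSpace ℝ (Fin n),
        ∫⁻ y in Metric.ball x δ, ENNReal.ofReal (Real.log (‖x - y‖ ^ (-(n : ℝ))) * |V y|))
      (nhdsWithin 0 (Set.Ioi 0)) (nhds 0)
  else
    (⨆ x : EuclideanSpace ℝ (Fin n), ∫⁻ y in Metric.ball x 1, ENNReal.ofReal |V y|) < ⊤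

/-- The comparison kernel `J(t,x)`. -/
noncomputable def Jfun (n : ℕ) (α : ℝ) (t : ℝ) (x : EuclideanSpace ℝ (Fin n)) : ℝ :=
  if 2 * α < n then min (‖x‖ ^ (2 * α - (n : ℝ))) (t ^ 2 * ‖x‖ ^ (-(n : ℝ) - 2 * α))
  else if 2 * α = (n : ℝ) then
    min (max 1 (Real.log (t * ‖x‖ ^ (-(n : ℝ))))) (t ^ 2 * ‖x‖ ^ (-2 * (n : ℝ)))
  else min (t ^ (1 - (n : ℝ) / (2 * α))) (t ^ 2 * ‖x‖ ^ (-(n : ℝ) - 2 * α))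

/-- `K_V(t) = sup_{x∈ℝⁿ} ∫_{ℝⁿ} J(t, x-y) |V(y)| dy`. -/
noncomputable def KV (n : ℕ) (α : ℝ) (V : EuclideanSpace ℝ (Fin n) → ℝ) (t : ℝ) : ℝ≥0∞ :=
  ⨆ x : EuclideanSpace ℝ (Fin n),
    ∫⁻ y, ENNReal.ofReal (Jfun n α t (x - y) * |V y|)

/-!
Absorb `|V|` into the measure `dμ = |V| dy`. At the scale `t = r ^ (2α)` the kernel `J(t, ·)` is
dominated on the ball of radius `r` by the kernel `k` of the Kato condition (the constant
`r ^ (2α - n)` if `2α > n`), and outside that ball by `c (r / ‖x‖) ^ p`, where `p > n` and `c` is a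
lower bound of `k` on the ball. Against such a tail every measure integrates to at most a multiple
of `c sup_z μ (ball z r)`: by Tonelli, averaging the tail over balls of radius `r` trades `μ` for
the measures of these balls, and `(1 + ‖x‖) ^ (-p)` is integrable. So `K_V(t)` is controlled by the
local quantity at scale `r`; the converse control is pointwise. If `2α > n`, the factor
`r ^ (2α - n)` tends to `0`, and a covering argument compares the balls of radius `r` with unit
balls.
-/

open scoped Topology

section Limits

theorem tendsto_rpow_nhdsGT_zero {a : ℝ} (ha : 0 < a) :
    Tendsto (fun t : ℝ => t ^ a) (𝓝[>] 0) (𝓝[>] 0) := by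
  refine tendsto_nhdsWithin_iff.2 ⟨?_, ?_⟩
  · exact (tendsto_id.mono_left nhdsWithin_le_nhds).rpow_const_nhds_zero ha
  · filter_upwards [self_mem_nhdsWithin] with t ht using rpow_pos_of_pos ht a

theorem tendsto_comp_rpow_nhdsGT_zero_iff {β : Type*} {f : ℝ → β} {l : Filter β} {a : ℝ}
    (ha : 0 < a) :
    Tendsto (fun t => f (t ^ a)) (𝓝[>] 0) l ↔ Tendsto f (𝓝[>] 0) l := by
  refine ⟨fun h => ?_, fun h => h.comp (tendsto_rpow_nhdsGT_zero ha)⟩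
  refine (h.comp (tendsto_rpow_nhdsGT_zero (inv_pos.2 ha))).congr' ?_
  filter_upwards [self_mem_nhdsWithin] with t (ht : 0 < t)
  simp only [Function.comp_apply, rpow_inv_rpow ht.le ha.ne']

theorem tendsto_zero_of_eventually_le_const_mul {ι : Type*} {l : Filter ι} {f g : ι → ℝ≥0∞}
    {C : ℝ≥0∞} (hC : C ≠ ⊤) (hf : Tendsto f l (𝓝 0)) (h : ∀ᶠ i in l, g i ≤ C * f i) :
    Tendsto g l (𝓝 0) := by
  have hCf : Tendsto (fun i => C * f i) l (𝓝 0) := by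
    simpa only [mul_zero] using ENNReal.Tendsto.const_mul hf (Or.inr hC)
  exact tendsto_of_tendsto_of_tendsto_of_le_of_le' tendsto_const_nhds hCf
    (Eventually.of_forall fun _ => zero_le) h

end Limits

section Averaging

theorem lintegral_setLIntegral_ball_comm {X : Type*} [PseudoMetricSpace X]
    [SecondCountableTopology X] [MeasurableSpace X] [BorelSpace X] (μ ν : Measure X) [SFinite μ]
    [SFinite ν] {f : X → ℝ≥0∞} (hf : Measurable f) (r : ℝ) :
    ∫⁻ y, ∫⁻ z in Metric.ball y r, f z ∂ν ∂μ = ∫⁻ z, f z * μ (Metric.ball z r) ∂ν := by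
  have hS : MeasurableSet {q : X × X | dist q.1 q.2 < r} :=
    (isOpen_lt continuous_dist continuous_const).measurableSet
  calc ∫⁻ y, ∫⁻ z in Metric.ball y r, f z ∂ν ∂μ
      = ∫⁻ y, ∫⁻ z, {q : X × X | dist q.1 q.2 < r}.indicator (fun q => f q.2) (y, z) ∂ν ∂μ := by
        refine lintegral_congr fun y => ?_
        rw [← lintegral_indicator Metric.isOpen_ball.measurableSet]
        simp only [Set.indicator, Metric.mem_ball', Set.mem_ofPred_eq]
    _ = ∫⁻ z, ∫⁻ y, {q : X × X | dist q.1 q.2 < r}.indicator (fun q => f q.2) (y, z) ∂μ ∂ν :=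
        lintegral_lintegral_swap ((hf.comp measurable_snd).indicator hS).aemeasurable
    _ = ∫⁻ z, f z * μ (Metric.ball z r) ∂ν := by
        refine lintegral_congr fun z => ?_
        rw [← setLIntegral_const, ← lintegral_indicator Metric.isOpen_ball.measurableSet]
        simp only [Set.indicator, Metric.mem_ball, Set.mem_ofPred_eq]

theorem lintegral_sub_mul_measure_ball_le {G : Type*} [SeminormedAddCommGroup G]
    [SecondCountableTopology G] [MeasurableSpace G] [BorelSpace G] (μ ν : Measure G) [SFinite μ]
    [SFinite ν] [ν.IsAddLeftInvariant] [ν.IsNegInvariant] {φ : G → ℝ≥0∞} (hφ : Measurable φ)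
    {A : ℝ≥0∞} {r : ℝ} (hA : ∀ v w, dist v w < r → φ v ≤ A * φ w) (x : G) :
    (∫⁻ y, φ (x - y) ∂μ) * ν (Metric.ball 0 r) ≤
      A * (∫⁻ v, φ v ∂ν) * ⨆ z, μ (Metric.ball z r) := by
  have hball (y : G) : ν (Metric.ball y r) = ν (Metric.ball 0 r) := by
    rw [← measure_preimage_add ν y (Metric.ball y r), preimage_add_ball, sub_self]
  have hφx : Measurable fun y => φ (x - y) := hφ.comp (measurable_const.sub measurable_id)
  calc (∫⁻ y, φ (x - y) ∂μ) * ν (Metric.ball 0 r)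
      = ∫⁻ y, ∫⁻ _ in Metric.ball y r, φ (x - y) ∂ν ∂μ := by
        simp only [setLIntegral_const, hball]
        rw [lintegral_mul_const _ hφx]
    _ ≤ ∫⁻ y, ∫⁻ z in Metric.ball y r, A * φ (x - z) ∂ν ∂μ := by
        refine lintegral_mono fun y =>
          setLIntegral_mono' Metric.isOpen_ball.measurableSet fun z hz => hA _ _ ?_
        rwa [dist_sub_left, dist_comm]
    _ = ∫⁻ z, A * φ (x - z) * μ (Metric.ball z r) ∂ν :=
        lintegral_setLIntegral_ball_comm μ ν (hφx.const_mul A) r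
    _ ≤ ∫⁻ z, A * φ (x - z) * ⨆ z, μ (Metric.ball z r) ∂ν := by
        gcongr with z
        exact le_iSup (fun z => μ (Metric.ball z r)) z
    _ = A * (∫⁻ v, φ v ∂ν) * ⨆ z, μ (Metric.ball z r) := by
        rw [lintegral_mul_const _ (hφx.const_mul A), lintegral_const_mul _ hφx,
          lintegral_sub_left_eq_self φ x]

theorem one_add_norm_rpow_neg_le {G : Type*} [SeminormedAddCommGroup G] {p : ℝ} (hp : 0 ≤ p)
    {v w : G} (h : dist v w ≤ 1) : (1 + ‖v‖) ^ (-p) ≤ 2 ^ p * (1 + ‖w‖) ^ (-p) := by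
  have hw : ‖w‖ ≤ ‖v‖ + 1 := by
    linarith [norm_sub_norm_le w v, dist_eq_norm w v, dist_comm v w]
  calc (1 + ‖v‖) ^ (-p) = 2 ^ p * (2 * (1 + ‖v‖)) ^ (-p) := by
        rw [mul_rpow zero_le_two (by positivity), ← mul_assoc, ← rpow_add two_pos,
          add_neg_cancel, Real.rpow_zero, one_mul]
    _ ≤ 2 ^ p * (1 + ‖w‖) ^ (-p) := by
        gcongr ?_ * ?_
        exact rpow_le_rpow_of_nonpos (by positivity) (by linarith [norm_nonneg v]) (by linarith)

variable {E : Type*} [NormedAddCommGroup E] [NormedSpace ℝ E] [FiniteDimensional ℝ E]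
  [MeasurableSpace E]

open Module (finrank)

theorem exists_measure_ball_le_mul_iSup_measure_ball (R : ℝ) {r : ℝ} (hr : 0 < r) :
    ∃ N : ℕ, ∀ (μ : Measure E) (x : E),
      μ (Metric.ball x R) ≤ N * ⨆ z, μ (Metric.ball z r) := by
  obtain ⟨s, -, hs, hcover⟩ := (isCompact_closedBall (0 : E) R).finite_cover_balls hr
  lift s to Finset E using hs
  refine ⟨s.card, fun μ x => ?_⟩
  have hsub : Metric.ball x R ⊆ ⋃ c ∈ s, Metric.ball (x + c) r := by
    intro y hy
    have hyx : y - x ∈ Metric.closedBall 0 R := by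
      rw [mem_closedBall_zero_iff, ← dist_eq_norm]
      exact (Metric.mem_ball.1 hy).le
    simpa [dist_eq_norm, sub_sub] using hcover hyx
  calc μ (Metric.ball x R) ≤ ∑ c ∈ s, μ (Metric.ball (x + c) r) :=
        (measure_mono hsub).trans (measure_biUnion_finset_le _ _)
    _ ≤ ∑ _c ∈ s, ⨆ z, μ (Metric.ball z r) := by
        gcongr with c
        exact le_iSup (fun z => μ (Metric.ball z r)) (x + c)
    _ = s.card * ⨆ z, μ (Metric.ball z r) := by rw [Finset.sum_const, nsmul_eq_mul]

variable [BorelSpace E]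

theorem exists_lintegral_one_add_norm_rpow_le {p : ℝ} (hp : (finrank ℝ E : ℝ) < p) :
    ∃ C : ℝ≥0∞, C ≠ ⊤ ∧ ∀ (μ : Measure E) [SFinite μ] (x : E),
      ∫⁻ y, ENNReal.ofReal ((1 + ‖x - y‖) ^ (-p)) ∂μ ≤ C * ⨆ z, μ (Metric.ball z 1) := by
  let ν : Measure E := Measure.addHaar
  let I := ∫⁻ v : E, ENNReal.ofReal ((1 + ‖v‖) ^ (-p)) ∂ν
  have hI : I < ⊤ := finite_integral_one_add_norm hp
  have hball : ν (Metric.ball 0 1) ≠ 0 := (Metric.measure_ball_pos ν 0 one_pos).ne'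
  refine ⟨ENNReal.ofReal (2 ^ p) * I / ν (Metric.ball 0 1),
    ENNReal.div_ne_top (by finiteness) hball, fun μ _ x => ?_⟩
  have hslow (v w : E) (h : dist v w < 1) : ENNReal.ofReal ((1 + ‖v‖) ^ (-p)) ≤
      ENNReal.ofReal (2 ^ p) * ENNReal.ofReal ((1 + ‖w‖) ^ (-p)) := by
    rw [← ENNReal.ofReal_mul (by positivity)]
    exact ENNReal.ofReal_le_ofReal
      (one_add_norm_rpow_neg_le ((Nat.cast_nonneg _).trans hp.le) h.le)
  rw [← ENNReal.mul_div_right_comm,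
    ENNReal.le_div_iff_mul_le (Or.inl hball) (Or.inl measure_ball_lt_top.ne)]
  exact lintegral_sub_mul_measure_ball_le μ ν (by fun_prop) hslow x

theorem exists_lintegral_one_add_norm_div_rpow_le {p : ℝ} (hp : (finrank ℝ E : ℝ) < p) :
    ∃ C : ℝ≥0∞, C ≠ ⊤ ∧ ∀ (μ : Measure E) [SFinite μ] (x : E) {r : ℝ}, 0 < r →
      ∫⁻ y, ENNReal.ofReal ((1 + ‖x - y‖ / r) ^ (-p)) ∂μ ≤ C * ⨆ z, μ (Metric.ball z r) := by
  obtain ⟨C, hC, hunit⟩ := exists_lintegral_one_add_norm_rpow_le (E := E) hp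
  refine ⟨C, hC, fun μ _ x r hr => ?_⟩
  have hdilate : Measurable fun y : E => r⁻¹ • y := measurable_const_smul r⁻¹
  have hball (z : E) : μ.map (r⁻¹ • ·) (Metric.ball z 1) = μ (Metric.ball (r • z) r) := by
    rw [Measure.map_apply hdilate measurableSet_ball, Set.preimage_smul_inv₀ hr.ne',
      _root_.smul_ball hr.ne', norm_of_nonneg hr.le, mul_one]
  have hnorm (y : E) : ‖x - y‖ / r = ‖r⁻¹ • x - r⁻¹ • y‖ := by
    rw [← smul_sub, norm_smul_of_nonneg (inv_nonneg.2 hr.le), div_eq_inv_mul]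
  calc ∫⁻ y, ENNReal.ofReal ((1 + ‖x - y‖ / r) ^ (-p)) ∂μ
      = ∫⁻ w, ENNReal.ofReal ((1 + ‖r⁻¹ • x - w‖) ^ (-p)) ∂μ.map (r⁻¹ • ·) := by
        simp only [hnorm]
        rw [lintegral_map (by fun_prop) hdilate]
    _ ≤ C * ⨆ z, μ.map (r⁻¹ • ·) (Metric.ball z 1) := hunit _ _
    _ ≤ C * ⨆ z, μ (Metric.ball z r) :=
        mul_le_mul' le_rfl
          (iSup_le fun z => (hball z).trans_le (le_iSup (fun z => μ (Metric.ball z r)) _))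

end Averaging

section Potentials

variable {E : Type*} [NormedAddCommGroup E] [MeasurableSpace E]

/-- The supremum over `x` of the potential `∫ k(x - y) dμ(y)`. As `k` enters through
`ENNReal.ofReal`, its negative part is ignored. -/
noncomputable def supPotential (μ : Measure E) (k : E → ℝ) : ℝ≥0∞ :=
  ⨆ x, ∫⁻ y, ENNReal.ofReal (k (x - y)) ∂μ

/-- The supremum over `x` of the potential `∫ k(x - y) dμ(y)` restricted to `‖x - y‖ < r`; the Kato
condition asks that it tend to `0` with `r`. -/
noncomputable def localSupPotential (μ : Measure E) (k : E → ℝ) (r : ℝ) : ℝ≥0∞ :=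
  ⨆ x, ∫⁻ y in Metric.ball x r, ENNReal.ofReal (k (x - y)) ∂μ

theorem localSupPotential_const (μ : Measure E) (c r : ℝ) :
    localSupPotential μ (fun _ => c) r = ENNReal.ofReal c * ⨆ z, μ (Metric.ball z r) := by
  simp only [localSupPotential, setLIntegral_const, ENNReal.mul_iSup]

variable [BorelSpace E]

theorem setLIntegral_ball_le_of_forall_norm_lt (μ : Measure E) [NullSingletonClass μ] {r : ℝ}
    {k l : E → ℝ} (h : ∀ v, 0 < ‖v‖ → ‖v‖ < r → k v ≤ l v) (x : E) :
    ∫⁻ y in Metric.ball x r, ENNReal.ofReal (k (x - y)) ∂μ ≤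
      ∫⁻ y in Metric.ball x r, ENNReal.ofReal (l (x - y)) ∂μ := by
  refine setLIntegral_mono_ae' Metric.isOpen_ball.measurableSet ?_
  filter_upwards [measure_eq_zero_iff_ae_notMem.1 (measure_singleton (μ := μ) x)] with y hyx hy
  exact ENNReal.ofReal_le_ofReal
    (h _ (norm_sub_pos_iff.2 (Ne.symm hyx)) (mem_ball_iff_norm'.1 hy))

theorem localSupPotential_mono (μ : Measure E) [NullSingletonClass μ] {r : ℝ} {k l : E → ℝ}
    (h : ∀ v, 0 < ‖v‖ → ‖v‖ < r → k v ≤ l v) :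
    localSupPotential μ k r ≤ localSupPotential μ l r :=
  iSup_mono (setLIntegral_ball_le_of_forall_norm_lt μ h)

theorem localSupPotential_le_supPotential (μ : Measure E) [NullSingletonClass μ] {a r : ℝ}
    (ha : 0 ≤ a) {k J : E → ℝ} (h : ∀ v, 0 < ‖v‖ → ‖v‖ < r → k v ≤ a * J v) :
    localSupPotential μ k r ≤ ENNReal.ofReal a * supPotential μ J := by
  refine iSup_le fun x => ?_
  calc ∫⁻ y in Metric.ball x r, ENNReal.ofReal (k (x - y)) ∂μ
      ≤ ∫⁻ y, ENNReal.ofReal (a * J (x - y)) ∂μ :=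
        (setLIntegral_ball_le_of_forall_norm_lt μ h x).trans (setLIntegral_le_lintegral _ _)
    _ = ENNReal.ofReal a * ∫⁻ y, ENNReal.ofReal (J (x - y)) ∂μ := by
        simp only [ENNReal.ofReal_mul ha]
        exact lintegral_const_mul' _ _ ENNReal.ofReal_ne_top
    _ ≤ ENNReal.ofReal a * supPotential μ J := by
        gcongr
        exact le_iSup (fun x => ∫⁻ y, ENNReal.ofReal (J (x - y)) ∂μ) x

theorem div_rpow_le_two_rpow_mul {p r s : ℝ} (hp : 0 ≤ p) (hr : 0 < r) (hrs : r ≤ s) :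
    (r / s) ^ p ≤ 2 ^ p * (1 + s / r) ^ (-p) := by
  have hs : 0 < s := hr.trans_le hrs
  rw [rpow_neg (by positivity), ← div_eq_mul_inv, ← div_rpow zero_le_two (by positivity)]
  refine rpow_le_rpow (by positivity) ?_ hp
  rw [one_add_div hr.ne', div_div_eq_mul_div, div_le_div_iff₀ hs (by positivity)]
  nlinarith

open Module (finrank)

theorem exists_setLIntegral_compl_ball_le [NormedSpace ℝ E] [FiniteDimensional ℝ E] {p : ℝ}
    (hp : (finrank ℝ E : ℝ) < p) :
    ∃ C : ℝ≥0∞, C ≠ ⊤ ∧ ∀ (μ : Measure E) [SFinite μ] {J : E → ℝ} {c r : ℝ}, 0 < r → 0 ≤ c →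
      (∀ v, r ≤ ‖v‖ → J v ≤ c * (r / ‖v‖) ^ p) → ∀ x : E,
      ∫⁻ y in (Metric.ball x r)ᶜ, ENNReal.ofReal (J (x - y)) ∂μ ≤
        C * (ENNReal.ofReal c * ⨆ z, μ (Metric.ball z r)) := by
  obtain ⟨C, hC, htail⟩ := exists_lintegral_one_add_norm_div_rpow_le (E := E) hp
  have hp0 : 0 ≤ p := (Nat.cast_nonneg _).trans hp.le
  refine ⟨ENNReal.ofReal (2 ^ p) * C, by finiteness, fun μ _ J c r hr hc hfar x => ?_⟩
  have hpt (y : E) (hy : y ∈ (Metric.ball x r)ᶜ) : ENNReal.ofReal (J (x - y)) ≤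
      ENNReal.ofReal (2 ^ p * c) * ENNReal.ofReal ((1 + ‖x - y‖ / r) ^ (-p)) := by
    rw [Set.mem_compl_iff, mem_ball_iff_norm', not_lt] at hy
    rw [← ENNReal.ofReal_mul (by positivity)]
    refine ENNReal.ofReal_le_ofReal ((hfar _ hy).trans ?_)
    rw [mul_comm (2 ^ p) c, mul_assoc]
    gcongr
    exact div_rpow_le_two_rpow_mul hp0 hr hy
  calc ∫⁻ y in (Metric.ball x r)ᶜ, ENNReal.ofReal (J (x - y)) ∂μ
      ≤ ∫⁻ y, ENNReal.ofReal (2 ^ p * c) * ENNReal.ofReal ((1 + ‖x - y‖ / r) ^ (-p)) ∂μ :=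
        (setLIntegral_mono' measurableSet_ball.compl hpt).trans (setLIntegral_le_lintegral _ _)
    _ ≤ ENNReal.ofReal (2 ^ p * c) * (C * ⨆ z, μ (Metric.ball z r)) := by
        rw [lintegral_const_mul' _ _ ENNReal.ofReal_ne_top]
        gcongr
        exact htail μ x hr
    _ = ENNReal.ofReal (2 ^ p) * C * (ENNReal.ofReal c * ⨆ z, μ (Metric.ball z r)) := by
        rw [ENNReal.ofReal_mul (by positivity)]
        ring

theorem exists_supPotential_le_localSupPotential [NormedSpace ℝ E] [FiniteDimensional ℝ E] {p : ℝ}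
    (hp : (finrank ℝ E : ℝ) < p) :
    ∃ C : ℝ≥0∞, C ≠ ⊤ ∧ ∀ (μ : Measure E) [SFinite μ] [NullSingletonClass μ] {J k : E → ℝ}
      {c r : ℝ}, 0 < r → 0 ≤ c → (∀ v, 0 < ‖v‖ → ‖v‖ < r → c ≤ k v) →
      (∀ v, 0 < ‖v‖ → ‖v‖ < r → J v ≤ k v) → (∀ v, r ≤ ‖v‖ → J v ≤ c * (r / ‖v‖) ^ p) →
      supPotential μ J ≤ C * localSupPotential μ k r := by
  obtain ⟨C, hC, htail⟩ := exists_setLIntegral_compl_ball_le (E := E) hp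
  refine ⟨1 + C, by finiteness, fun μ _ _ J k c r hr hc hck hnear hfar => iSup_le fun x => ?_⟩
  have hin : ∫⁻ y in Metric.ball x r, ENNReal.ofReal (J (x - y)) ∂μ ≤ localSupPotential μ k r :=
    (setLIntegral_ball_le_of_forall_norm_lt μ hnear x).trans
      (le_iSup (fun x => ∫⁻ y in Metric.ball x r, ENNReal.ofReal (k (x - y)) ∂μ) x)
  have hout : ∫⁻ y in (Metric.ball x r)ᶜ, ENNReal.ofReal (J (x - y)) ∂μ ≤
      C * localSupPotential μ k r := by
    refine (htail μ hr hc hfar x).trans ?_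
    rw [← localSupPotential_const]
    gcongr
    exact localSupPotential_mono μ hck
  calc ∫⁻ y, ENNReal.ofReal (J (x - y)) ∂μ
      = ∫⁻ y in Metric.ball x r, ENNReal.ofReal (J (x - y)) ∂μ +
          ∫⁻ y in (Metric.ball x r)ᶜ, ENNReal.ofReal (J (x - y)) ∂μ :=
        (lintegral_add_compl _ measurableSet_ball).symm
    _ ≤ localSupPotential μ k r + C * localSupPotential μ k r := add_le_add hin hout
    _ = (1 + C) * localSupPotential μ k r := by ring

end Potentials

section Kernel

theorem sq_rpow_mul_rpow_neg_sub {r s : ℝ} (hr : 0 < r) (hs : 0 < s) (a d : ℝ) :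
    (r ^ a) ^ 2 * s ^ (-d - a) = r ^ (a - d) * (r / s) ^ (d + a) := by
  rw [div_rpow hr.le hs.le, ← mul_div_assoc, ← Real.rpow_add hr, div_eq_mul_inv,
    ← Real.rpow_neg hs.le, ← rpow_mul_natCast hr.le]
  congr 2
  · push_cast
    ring
  · ring

variable {n : ℕ} {α r : ℝ} {v : EuclideanSpace ℝ (Fin n)}

theorem Jfun_rpow_of_two_mul_lt (h : 2 * α < n) (hr : 0 < r) (hv : 0 < ‖v‖) :
    Jfun n α (r ^ (2 * α)) v =
      min (‖v‖ ^ (2 * α - n)) (r ^ (2 * α - n) * (r / ‖v‖) ^ (n + 2 * α)) := by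
  rw [Jfun, if_pos h, sq_rpow_mul_rpow_neg_sub hr hv]

theorem Jfun_of_two_mul_eq (h : 2 * α = n) (t : ℝ) :
    Jfun n α t v = min (max 1 (log (t * ‖v‖ ^ (-n : ℝ)))) ((t * ‖v‖ ^ (-n : ℝ)) ^ 2) := by
  rw [Jfun, if_neg h.not_lt, if_pos h, mul_pow, ← rpow_mul_natCast (norm_nonneg v)]
  congr 3
  push_cast
  ring

theorem Jfun_rpow_of_lt_two_mul (h : (n : ℝ) < 2 * α) (hr : 0 < r) (hv : 0 < ‖v‖) :
    Jfun n α (r ^ (2 * α)) v =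
      min (r ^ (2 * α - n)) (r ^ (2 * α - n) * (r / ‖v‖) ^ (n + 2 * α)) := by
  have hα : 2 * α ≠ 0 := ((Nat.cast_nonneg n).trans_lt h).ne'
  rw [Jfun, if_neg h.not_gt, if_neg h.ne', sq_rpow_mul_rpow_neg_sub hr hv, ← rpow_mul hr.le,
    mul_one_sub, mul_div_cancel₀ _ hα]

theorem log_le_min_max_one_sq {u : ℝ} (hu : 0 < u) : log u ≤ min (max 1 (log u)) (u ^ 2) :=
  le_min (le_max_right _ _) (by nlinarith [log_le_sub_one_of_pos hu, sq_nonneg (u - 1)])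

theorem log_rpow_neg_le_two_mul_log {d s : ℝ} (hd : 0 ≤ d) (hs : 0 < s) (hsr : s ≤ r) :
    log (s ^ (-d)) ≤ 2 * log (r ^ (d / 2) * s ^ (-d)) := by
  have hr : 0 < r := hs.trans_le hsr
  have hlog : d * log s ≤ d * log r := by gcongr
  rw [log_mul (by positivity) (by positivity), log_rpow hs, log_rpow hr]
  linarith

theorem one_le_log_rpow_neg {d s : ℝ} (hr : r ^ d ≤ exp (-1)) (hd : 0 ≤ d) (hs : 0 < s)
    (hsr : s ≤ r) : 1 ≤ log (s ^ (-d)) := by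
  have hsd : log (s ^ d) ≤ -1 :=
    (log_le_iff_le_exp (by positivity)).2 ((rpow_le_rpow hs.le hsr hd).trans hr)
  rw [Real.rpow_neg hs.le, Real.log_inv]
  linarith

end Kernel

section Comparison

variable {n : ℕ} {α : ℝ} (μ : Measure (EuclideanSpace ℝ (Fin n))) [NullSingletonClass μ]

theorem localSupPotential_le_supPotential_Jfun_of_two_mul_lt (hα : 0 < α) (h : 2 * α < n)
    (r : ℝ) :
    localSupPotential μ (fun v => ‖v‖ ^ (2 * α - n)) r ≤
      supPotential μ (Jfun n α (r ^ (2 * α))) := by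
  rw [← one_mul (supPotential _ _), ← ENNReal.ofReal_one]
  refine localSupPotential_le_supPotential μ zero_le_one fun v hv hvr => ?_
  rw [one_mul, Jfun, if_pos h]
  refine le_min le_rfl ?_
  calc ‖v‖ ^ (2 * α - n) = (‖v‖ ^ (2 * α)) ^ 2 * ‖v‖ ^ (-n - 2 * α) := by
        rw [sq_rpow_mul_rpow_neg_sub hv hv, div_self hv.ne', Real.one_rpow, mul_one]
    _ ≤ (r ^ (2 * α)) ^ 2 * ‖v‖ ^ (-n - 2 * α) := by gcongr

theorem localSupPotential_le_supPotential_Jfun_of_two_mul_eq (h : 2 * α = n) {r : ℝ}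
    (hr : 0 < r) :
    localSupPotential μ (fun v => log (‖v‖ ^ (-n : ℝ))) r ≤
      2 * supPotential μ (Jfun n α (r ^ (n / 2 : ℝ))) := by
  refine (localSupPotential_le_supPotential μ zero_le_two fun v hv hvr => ?_).trans_eq
    (by rw [ENNReal.ofReal_ofNat])
  rw [Jfun_of_two_mul_eq h]
  exact (log_rpow_neg_le_two_mul_log n.cast_nonneg hv hvr.le).trans
    (mul_le_mul_of_nonneg_left (log_le_min_max_one_sq (by positivity)) zero_le_two)

theorem ofReal_mul_iSup_measure_ball_le_supPotential_Jfun (h : (n : ℝ) < 2 * α) {r : ℝ}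
    (hr : 0 < r) :
    ENNReal.ofReal (r ^ (2 * α - n)) * ⨆ z, μ (Metric.ball z r) ≤
      supPotential μ (Jfun n α (r ^ (2 * α))) := by
  rw [← localSupPotential_const, ← one_mul (supPotential _ _), ← ENNReal.ofReal_one]
  refine localSupPotential_le_supPotential μ zero_le_one fun v hv hvr => ?_
  rw [one_mul, Jfun_rpow_of_lt_two_mul h hr hv]
  have hp : (0 : ℝ) ≤ n + 2 * α := by linarith [(Nat.cast_nonneg n : (0 : ℝ) ≤ n)]
  exact le_min le_rfl (le_mul_of_one_le_right (by positivity)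
    (one_le_rpow ((one_le_div hv).2 hvr.le) hp))

variable [SFinite μ]

theorem exists_supPotential_Jfun_le_of_two_mul_lt (hα : 0 < α) (h : 2 * α < n) :
    ∃ C : ℝ≥0∞, C ≠ ⊤ ∧ ∀ {r : ℝ}, 0 < r → supPotential μ (Jfun n α (r ^ (2 * α))) ≤
      C * localSupPotential μ (fun v => ‖v‖ ^ (2 * α - n)) r := by
  obtain ⟨C, hC, hcompare⟩ := exists_supPotential_le_localSupPotential
    (E := EuclideanSpace ℝ (Fin n)) (p := n + 2 * α)
    (by rw [finrank_euclideanSpace_fin]; linarith)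
  refine ⟨C, hC, fun {r} hr => hcompare μ (c := r ^ (2 * α - n)) hr (by positivity) ?_ ?_ ?_⟩
  · exact fun v hv hvr => rpow_le_rpow_of_nonpos hv hvr.le (by linarith)
  · exact fun v hv _ => (Jfun_rpow_of_two_mul_lt h hr hv).trans_le (min_le_left _ _)
  · exact fun v hv =>
      (Jfun_rpow_of_two_mul_lt h hr (hr.trans_le hv)).trans_le (min_le_right _ _)

theorem exists_supPotential_Jfun_le_of_two_mul_eq (hα : 0 < α) (h : 2 * α = n) :
    ∃ C : ℝ≥0∞, C ≠ ⊤ ∧ ∀ {r : ℝ}, 0 < r → r ^ (n : ℝ) ≤ exp (-1) →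
      supPotential μ (Jfun n α (r ^ (n : ℝ))) ≤
        C * localSupPotential μ (fun v => log (‖v‖ ^ (-n : ℝ))) r := by
  have hn : (0 : ℝ) < n := by linarith
  obtain ⟨C, hC, hcompare⟩ := exists_supPotential_le_localSupPotential
    (E := EuclideanSpace ℝ (Fin n)) (p := n * 2)
    (by rw [finrank_euclideanSpace_fin]; linarith)
  refine ⟨C, hC, fun {r} hr hre => ?_⟩
  have hlog (v : EuclideanSpace ℝ (Fin n)) (hv : 0 < ‖v‖) (hvr : ‖v‖ < r) :
      1 ≤ log (‖v‖ ^ (-n : ℝ)) :=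
    one_le_log_rpow_neg hre hn.le hv hvr.le
  refine hcompare μ (c := 1) hr zero_le_one hlog (fun v hv hvr => ?_) (fun v _ => ?_)
  · have hr1 : r ^ (n : ℝ) ≤ 1 := hre.trans (exp_le_one_iff.2 (by norm_num))
    rw [Jfun_of_two_mul_eq h]
    refine (min_le_left _ _).trans (max_le (hlog v hv hvr) (log_le_log (by positivity) ?_))
    exact mul_le_of_le_one_left (by positivity) hr1
  · rw [Jfun_of_two_mul_eq h, one_mul, Real.rpow_neg (norm_nonneg v), ← div_eq_mul_inv,
      ← div_rpow hr.le (norm_nonneg v), ← rpow_mul_natCast (by positivity)]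
    exact min_le_right _ _

theorem exists_supPotential_Jfun_le_of_lt_two_mul (h : (n : ℝ) < 2 * α) :
    ∃ C : ℝ≥0∞, C ≠ ⊤ ∧ ∀ {r : ℝ}, 0 < r → supPotential μ (Jfun n α (r ^ (2 * α))) ≤
      C * (ENNReal.ofReal (r ^ (2 * α - n)) * ⨆ z, μ (Metric.ball z r)) := by
  obtain ⟨C, hC, hcompare⟩ := exists_supPotential_le_localSupPotential
    (E := EuclideanSpace ℝ (Fin n)) (p := n + 2 * α)
    (by rw [finrank_euclideanSpace_fin]; exact lt_add_of_pos_right _ (n.cast_nonneg.trans_lt h))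
  refine ⟨C, hC, fun {r} hr => ?_⟩
  rw [← localSupPotential_const]
  refine hcompare μ hr (by positivity) (fun _ _ _ => le_rfl) ?_ ?_
  · exact fun v hv _ => (Jfun_rpow_of_lt_two_mul h hr hv).trans_le (min_le_left _ _)
  · exact fun v hv =>
      (Jfun_rpow_of_lt_two_mul h hr (hr.trans_le hv)).trans_le (min_le_right _ _)

theorem tendsto_localSupPotential_rpow_iff (hα : 0 < α) (h : 2 * α < n) :
    Tendsto (localSupPotential μ fun v => ‖v‖ ^ (2 * α - n)) (𝓝[>] 0) (𝓝 0) ↔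
      Tendsto (fun t => supPotential μ (Jfun n α t)) (𝓝[>] 0) (𝓝 0) := by
  rw [← tendsto_comp_rpow_nhdsGT_zero_iff (f := fun t => supPotential μ (Jfun n α t))
    (mul_pos two_pos hα)]
  constructor <;> intro hlim
  · obtain ⟨C, hC, hle⟩ := exists_supPotential_Jfun_le_of_two_mul_lt μ hα h
    refine tendsto_zero_of_eventually_le_const_mul hC hlim ?_
    filter_upwards [self_mem_nhdsWithin] with r hr using hle hr
  · refine tendsto_zero_of_eventually_le_const_mul ENNReal.one_ne_top hlim
      (Eventually.of_forall fun r => ?_)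
    rw [one_mul]
    exact localSupPotential_le_supPotential_Jfun_of_two_mul_lt μ hα h r

theorem tendsto_localSupPotential_log_iff (hα : 0 < α) (h : 2 * α = n) :
    Tendsto (localSupPotential μ fun v => log (‖v‖ ^ (-n : ℝ))) (𝓝[>] 0) (𝓝 0) ↔
      Tendsto (fun t => supPotential μ (Jfun n α t)) (𝓝[>] 0) (𝓝 0) := by
  have hn : (0 : ℝ) < n := by linarith
  constructor <;> intro hlim
  · obtain ⟨C, hC, hle⟩ := exists_supPotential_Jfun_le_of_two_mul_eq μ hα h
    rw [← tendsto_comp_rpow_nhdsGT_zero_iff hn]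
    refine tendsto_zero_of_eventually_le_const_mul hC hlim ?_
    have hsmall : ∀ᶠ r : ℝ in 𝓝[>] 0, r ^ (n : ℝ) ≤ exp (-1) :=
      ((tendsto_rpow_nhdsGT_zero hn).mono_right nhdsWithin_le_nhds).eventually_le_const
        (exp_pos _)
    filter_upwards [self_mem_nhdsWithin, hsmall] with r hr hre using hle hr hre
  · refine tendsto_zero_of_eventually_le_const_mul (C := 2) ENNReal.ofNat_ne_top
      (hlim.comp (tendsto_rpow_nhdsGT_zero (half_pos hn))) ?_
    filter_upwards [self_mem_nhdsWithin] with r hr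
      using localSupPotential_le_supPotential_Jfun_of_two_mul_eq μ h hr

theorem iSup_measure_ball_lt_top_iff_tendsto (h : (n : ℝ) < 2 * α) :
    ⨆ z, μ (Metric.ball z 1) < ⊤ ↔
      Tendsto (fun t => supPotential μ (Jfun n α t)) (𝓝[>] 0) (𝓝 0) := by
  rw [← tendsto_comp_rpow_nhdsGT_zero_iff (f := fun t => supPotential μ (Jfun n α t))
    (n.cast_nonneg.trans_lt h)]
  constructor
  · intro hfin
    obtain ⟨C, hC, hle⟩ := exists_supPotential_Jfun_le_of_lt_two_mul μ h
    have hscale : Tendsto (fun r : ℝ => ENNReal.ofReal (r ^ (2 * α - n))) (𝓝[>] 0) (𝓝 0) := by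
      simpa only [ENNReal.ofReal_zero] using ENNReal.tendsto_ofReal
        ((tendsto_rpow_nhdsGT_zero (sub_pos.2 h)).mono_right nhdsWithin_le_nhds)
    refine tendsto_zero_of_eventually_le_const_mul (ENNReal.mul_ne_top hC hfin.ne) hscale ?_
    filter_upwards [self_mem_nhdsWithin,
      nhdsWithin_le_nhds (Iic_mem_nhds one_pos)] with r hr (hr1 : r ≤ 1)
    rw [mul_assoc, mul_comm (⨆ z, _)]
    refine (hle hr).trans ?_
    gcongr
  · intro hlim
    obtain ⟨r, hJ, hr : 0 < r⟩ :=
      ((hlim.eventually_lt_const ENNReal.zero_lt_top).and self_mem_nhdsWithin).exists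
    have hMr : ⨆ z, μ (Metric.ball z r) < ⊤ :=
      ENNReal.lt_top_of_mul_ne_top_right
        ((ofReal_mul_iSup_measure_ball_le_supPotential_Jfun μ h hr).trans_lt hJ).ne
        (ENNReal.ofReal_pos.2 (by positivity)).ne'
    obtain ⟨N, hN⟩ :=
      exists_measure_ball_le_mul_iSup_measure_ball (E := EuclideanSpace ℝ (Fin n)) 1 hr
    exact (iSup_le (hN μ)).trans_lt (ENNReal.mul_lt_top (ENNReal.natCast_lt_top N) hMr)

end Comparison

theorem setLIntegral_ofReal_mul_abs {X : Type*} [MeasurableSpace X] {μ : Measure X} {V : X → ℝ}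
    (hV : AEMeasurable V μ) (k : X → ℝ) {s : Set X} (hs : MeasurableSet s) :
    ∫⁻ y in s, ENNReal.ofReal (k y * |V y|) ∂μ =
      ∫⁻ y in s, ENNReal.ofReal (k y) ∂μ.withDensity fun y => ENNReal.ofReal |V y| := by
  rw [setLIntegral_withDensity_eq_setLIntegral_mul_non_measurable₀ μ
    (hV.abs.ennreal_ofReal.restrict) _ hs (ae_of_all _ fun _ => ENNReal.ofReal_lt_top)]
  simp only [ENNReal.ofReal_mul' (abs_nonneg _), Pi.mul_apply, mul_comm]

theorem KV_eq_supPotential {n : ℕ} (α : ℝ) {V : EuclideanSpace ℝ (Fin n) → ℝ}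
    (hV : AEMeasurable V) (t : ℝ) :
    KV n α V t =
      supPotential (volume.withDensity fun y => ENNReal.ofReal |V y|) (Jfun n α t) := by
  refine iSup_congr fun x => ?_
  simpa only [Measure.restrict_univ] using
    setLIntegral_ofReal_mul_abs hV (fun y => Jfun n α t (x - y)) MeasurableSet.univ

theorem iSup_setLIntegral_ball_eq_localSupPotential {n : ℕ} {V : EuclideanSpace ℝ (Fin n) → ℝ}
    (hV : AEMeasurable V) (k : EuclideanSpace ℝ (Fin n) → ℝ) (r : ℝ) :
    ⨆ x, ∫⁻ y in Metric.ball x r, ENNReal.ofReal (k (x - y) * |V y|) =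
      localSupPotential (volume.withDensity fun y => ENNReal.ofReal |V y|) k r :=
  iSup_congr fun x => setLIntegral_ofReal_mul_abs hV (fun y => k (x - y)) measurableSet_ball

theorem katoClass_iff_KV_tendsto_zero_general {n : ℕ} (hn : 1 ≤ n) {α : ℝ} (hα : 0 < α)
    {V : EuclideanSpace ℝ (Fin n) → ℝ} (hV : AEMeasurable V) :
    katoClass n α V ↔ Tendsto (KV n α V) (𝓝[>] 0) (𝓝 0) := by
  have : Nonempty (Fin n) := ⟨⟨0, hn⟩⟩
  simp only [katoClass, funext (KV_eq_supPotential α hV)]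
  split_ifs with hlt heq
  · rw [← tendsto_localSupPotential_rpow_iff _ hα hlt]
    exact tendsto_congr (iSup_setLIntegral_ball_eq_localSupPotential hV
      fun v => ‖v‖ ^ (2 * α - n))
  · rw [← tendsto_localSupPotential_log_iff _ hα heq]
    exact tendsto_congr (iSup_setLIntegral_ball_eq_localSupPotential hV
      fun v => Real.log (‖v‖ ^ (-n : ℝ)))
  · rw [← iSup_measure_ball_lt_top_iff_tendsto _ (lt_of_le_of_ne (not_lt.1 hlt) (Ne.symm heq))]
    simp only [withDensity_apply _ measurableSet_ball]

/-- for non-integer `α > 0`, a real-valued measurable `V` belongs to the Kato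
class `K_{2α}(ℝⁿ)` if and only if `K_V(t) → 0` as `t → 0⁺`. -/
theorem katoClass_iff_KV_tendsto_zero (n : ℕ) (hn : 1 ≤ n) (α : ℝ) (hα : 0 < α)
    (hαnotint : ∀ k : ℕ, α ≠ k) (V : EuclideanSpace ℝ (Fin n) → ℝ) (hVmeas : Measurable V) :
    katoClass n α V ↔
      Tendsto (fun t : ℝ => KV n α V t) (nhdsWithin 0 (Set.Ioi 0)) (nhds 0) := by
  exact katoClass_iff_KV_tendsto_zero_general hn hα hVmeas.aemeasurable
end

section
/- Let α > 0 and n ≥ 1. There exists a constant C₂ > 0, depending only on n and α, such that for every μ > 0 and every x ∈ ℝⁿ \ {0}: ∫₀^∞ e^{-μ t} I(t,x) dt ≤ C₂ J(μ^{-1}, x). -/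
open Real MeasureTheory
open scoped Classical

/-- `I(t,x) = min(t·|x|^{-(n+2α)}, t^{-n/(2α)})`  (with the convention that at `x = 0` only the
second, finite, term is kept, since `|0|^{-(n+2α)} = +∞`). -/
noncomputable def Ifun (n : ℕ) (α : ℝ) (t : ℝ) (x : EuclideanSpace ℝ (Fin n)) : ℝ :=
  if x = 0 then t ^ (-(n : ℝ) / (2 * α))
  else min (t * ‖x‖ ^ (-((n : ℝ) + 2 * α))) (t ^ (-(n : ℝ) / (2 * α)))

/-!
In the variables `b = n / (2α)` and `R = |x|^{2α}` the kernel `I` becomes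
`min (t R^{-b-1}) (t^{-b})`, whose two branches cross at `t = R`. Bounding it by the linear branch
for all `t` gives the term `μ⁻² R^{-b-1}` of `J`. For the other term, if `b < 1` the branch `t^{-b}`
alone gives a Gamma integral. If `b ≥ 1` then `(0, R)` contributes at most `R^{1-b} / 2`, and on
`(R, ∞)` the integral of `e^{-μt} t^{-b}` is finite without the exponential when `b > 1`, and an
exponential integral, hence logarithmic in `μR`, when `b = 1`.
-/

section LaplaceProfile

open Set

/-- The kernel `I(t, x)` as a function of time, in the variables `b = n / (2α)` and
`R = |x|^{2α}`. -/
noncomputable def heatProfile (b R t : ℝ) : ℝ :=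
  min (t * R ^ (-b - 1)) (t ^ (-b))

/-- The first term of the minimum defining `J(s, x)`, in the variables `b = n / (2α)` and
`R = |x|^{2α}`; it governs the range `R ≤ s`. -/
noncomputable def resolventNearProfile (b R s : ℝ) : ℝ :=
  if 1 < b then R ^ (1 - b) else if b = 1 then max 1 (log (s * R⁻¹)) else s ^ (1 - b)

/-- The kernel `J(s, x)`, in the variables `b = n / (2α)` and `R = |x|^{2α}`. -/
noncomputable def resolventProfile (b R s : ℝ) : ℝ :=
  min (resolventNearProfile b R s) (s ^ 2 * R ^ (-b - 1))

lemma le_max_mul_min {A B C D F : ℝ} (hA : 0 ≤ A) (hB : 0 ≤ B)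
    (hFA : F ≤ C * A) (hFB : F ≤ D * B) : F ≤ max C D * min A B := by
  rcases min_choice A B with h | h <;> rw [h]
  · exact hFA.trans (by gcongr; exact le_max_left _ _)
  · exact hFB.trans (by gcongr; exact le_max_right _ _)

variable {b p s t μ R : ℝ}

lemma integrableOn_exp_neg_mul_mul_rpow_Ioi (hp : -1 < p) (hμ : 0 < μ) :
    IntegrableOn (fun t : ℝ ↦ rexp (-μ * t) * t ^ p) (Ioi 0) := by
  simpa only [rpow_one, mul_comm] using integrableOn_rpow_mul_exp_neg_mul_rpow hp one_pos hμ

lemma integral_exp_neg_mul_mul_rpow_Ioi (hp : -1 < p) (hμ : 0 < μ) :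
    ∫ t in Ioi (0 : ℝ), rexp (-μ * t) * t ^ p = Gamma (p + 1) * μ⁻¹ ^ (p + 1) := by
  have h := integral_rpow_mul_exp_neg_mul_Ioi (a := p + 1) (by linarith) hμ
  rw [add_sub_cancel_right, one_div] at h
  rw [mul_comm (Gamma _), ← h]
  simp only [neg_mul, mul_comm (rexp _)]

lemma integrableOn_exp_neg_mul_inv (hμ : 0 < μ) (hR : 0 < R) :
    IntegrableOn (fun t : ℝ ↦ rexp (-μ * t) * t⁻¹) (Ioi R) := by
  have hexp := integrableOn_exp_mul_Ioi (neg_neg_of_pos hμ) R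
  refine (hexp.mul_const R⁻¹).mono' (by fun_prop) ?_
  filter_upwards [ae_restrict_mem measurableSet_Ioi] with t ht
  have ht0 : 0 < t := hR.trans ht
  rw [norm_of_nonneg (by positivity)]
  gcongr
  exact ht.le

lemma integral_exp_neg_mul_inv_le_one (hμ : 0 < μ) (hμR : μ⁻¹ ≤ R) :
    ∫ t in Ioi R, rexp (-μ * t) * t⁻¹ ≤ 1 := by
  have hR : 0 < R := (inv_pos.2 hμ).trans_le hμR
  have hexp := integrableOn_exp_mul_Ioi (neg_neg_of_pos hμ) R
  calc ∫ t in Ioi R, rexp (-μ * t) * t⁻¹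
      ≤ ∫ t in Ioi R, rexp (-μ * t) * μ := by
        refine setIntegral_mono_on (integrableOn_exp_neg_mul_inv hμ hR) (hexp.mul_const μ)
          measurableSet_Ioi fun t ht ↦ ?_
        gcongr
        exact inv_le_of_inv_le₀ hμ (hμR.trans ht.le)
    _ = rexp (-μ * R) := by
        rw [integral_mul_const, integral_exp_mul_Ioi (neg_neg_of_pos hμ), neg_div_neg_eq,
          div_mul_cancel₀ _ hμ.ne']
    _ ≤ 1 := exp_le_one_iff.2 (by nlinarith)

lemma integral_Ioc_exp_neg_mul_inv_le_log {M : ℝ} (hμ : 0 < μ) (hR : 0 < R) (hRM : R ≤ M) :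
    ∫ t in Ioc R M, rexp (-μ * t) * t⁻¹ ≤ log (M / R) := by
  have hinv : IntervalIntegrable (fun t : ℝ ↦ t⁻¹) volume R M :=
    intervalIntegral.intervalIntegrable_inv
      (fun t ht ↦ (hR.trans_le (uIcc_of_le hRM ▸ ht).1).ne') continuousOn_id
  rw [← integral_inv_of_pos hR (hR.trans_le hRM), intervalIntegral.integral_of_le hRM]
  refine setIntegral_mono_on
    ((integrableOn_exp_neg_mul_inv hμ hR).mono_set Ioc_subset_Ioi_self) hinv.1
    measurableSet_Ioc fun t ht ↦ ?_
  have ht0 : 0 < t := hR.trans ht.1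
  exact mul_le_of_le_one_left (by positivity) (exp_le_one_iff.2 (by nlinarith))

lemma integral_exp_neg_mul_inv_le (hμ : 0 < μ) (hR : 0 < R) :
    ∫ t in Ioi R, rexp (-μ * t) * t⁻¹ ≤ log⁺ (μ⁻¹ * R⁻¹) + 1 := by
  rcases le_total μ⁻¹ R with h | h
  · exact (integral_exp_neg_mul_inv_le_one hμ h).trans (le_add_of_nonneg_left posLog_nonneg)
  · have hint := integrableOn_exp_neg_mul_inv hμ hR
    rw [← Ioc_union_Ioi_eq_Ioi h, setIntegral_union Ioc_disjoint_Ioi_same measurableSet_Ioi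
      (hint.mono_set Ioc_subset_Ioi_self) (hint.mono_set (Ioi_subset_Ioi h))]
    gcongr
    · exact (integral_Ioc_exp_neg_mul_inv_le_log hμ hR h).trans (le_max_right _ _)
    · exact integral_exp_neg_mul_inv_le_one hμ le_rfl

lemma heatProfile_nonneg (hR : 0 ≤ R) (ht : 0 ≤ t) : 0 ≤ heatProfile b R t := by
  unfold heatProfile
  positivity

lemma exp_neg_mul_heatProfile_le_self (hμ : 0 ≤ μ) (hR : 0 ≤ R) (ht : 0 ≤ t) :
    rexp (-μ * t) * heatProfile b R t ≤ heatProfile b R t :=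
  mul_le_of_le_one_left (heatProfile_nonneg hR ht) (exp_le_one_iff.2 (by nlinarith))

lemma exp_neg_mul_heatProfile_le_linear (b μ R t : ℝ) :
    rexp (-μ * t) * heatProfile b R t ≤ rexp (-μ * t) * t ^ (1 : ℝ) * R ^ (-b - 1) := by
  rw [rpow_one, mul_assoc]
  gcongr
  exact min_le_left _ _

lemma exp_neg_mul_heatProfile_le_rpow (b μ R t : ℝ) :
    rexp (-μ * t) * heatProfile b R t ≤ rexp (-μ * t) * t ^ (-b) := by
  gcongr
  exact min_le_right _ _

lemma integrableOn_exp_neg_mul_heatProfile (hμ : 0 < μ) (hR : 0 < R) :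
    IntegrableOn (fun t ↦ rexp (-μ * t) * heatProfile b R t) (Ioi 0) := by
  have hlinear := integrableOn_exp_neg_mul_mul_rpow_Ioi (p := 1) (by norm_num) hμ
  refine (hlinear.mul_const (R ^ (-b - 1))).mono' (by unfold heatProfile; fun_prop) ?_
  filter_upwards [ae_restrict_mem measurableSet_Ioi] with t ht
  rw [norm_of_nonneg (mul_nonneg (exp_pos _).le (heatProfile_nonneg hR.le ht.le))]
  exact exp_neg_mul_heatProfile_le_linear b μ R t

lemma laplace_heatProfile_le_sq (hμ : 0 < μ) (hR : 0 < R) :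
    ∫ t in Ioi (0 : ℝ), rexp (-μ * t) * heatProfile b R t ≤ μ⁻¹ ^ 2 * R ^ (-b - 1) := by
  calc ∫ t in Ioi (0 : ℝ), rexp (-μ * t) * heatProfile b R t
      ≤ ∫ t in Ioi (0 : ℝ), rexp (-μ * t) * t ^ (1 : ℝ) * R ^ (-b - 1) :=
        setIntegral_mono_on (integrableOn_exp_neg_mul_heatProfile hμ hR)
          ((integrableOn_exp_neg_mul_mul_rpow_Ioi (by norm_num) hμ).mul_const _) measurableSet_Ioi
          fun t _ ↦ exp_neg_mul_heatProfile_le_linear b μ R t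
    _ = μ⁻¹ ^ 2 * R ^ (-b - 1) := by
        rw [integral_mul_const, integral_exp_neg_mul_mul_rpow_Ioi (by norm_num) hμ,
          one_add_one_eq_two, Gamma_two, one_mul, rpow_two]

lemma integral_Ioc_exp_neg_mul_heatProfile_le (hμ : 0 < μ) (hR : 0 < R) :
    ∫ t in Ioc 0 R, rexp (-μ * t) * heatProfile b R t ≤ R ^ (1 - b) / 2 := by
  have hlinear : IntervalIntegrable (fun t ↦ t * R ^ (-b - 1)) volume 0 R :=
    Continuous.intervalIntegrable (by fun_prop) _ _
  calc ∫ t in Ioc 0 R, rexp (-μ * t) * heatProfile b R t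
      ≤ ∫ t in Ioc 0 R, t * R ^ (-b - 1) :=
        setIntegral_mono_on
          ((integrableOn_exp_neg_mul_heatProfile hμ hR).mono_set Ioc_subset_Ioi_self) hlinear.1
          measurableSet_Ioc fun t ht ↦
            (exp_neg_mul_heatProfile_le_self hμ.le hR.le ht.1.le).trans (min_le_left _ _)
    _ = R ^ 2 * R ^ (-b - 1) / 2 := by
        rw [← intervalIntegral.integral_of_le hR.le, intervalIntegral.integral_mul_const,
          integral_id]
        ring
    _ = R ^ (1 - b) / 2 := by
        rw [← rpow_two, ← rpow_add hR]
        ring_nf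

lemma laplace_heatProfile_le_add_integral_Ioi (hμ : 0 < μ) (hR : 0 < R) :
    ∫ t in Ioi (0 : ℝ), rexp (-μ * t) * heatProfile b R t ≤
      R ^ (1 - b) / 2 + ∫ t in Ioi R, rexp (-μ * t) * heatProfile b R t := by
  have hint := integrableOn_exp_neg_mul_heatProfile (b := b) hμ hR
  rw [← Ioc_union_Ioi_eq_Ioi hR.le, setIntegral_union Ioc_disjoint_Ioi_same measurableSet_Ioi
    (hint.mono_set Ioc_subset_Ioi_self) (hint.mono_set (Ioi_subset_Ioi hR.le))]
  gcongr
  exact integral_Ioc_exp_neg_mul_heatProfile_le hμ hR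

lemma laplace_heatProfile_le_of_one_lt (hb : 1 < b) (hμ : 0 < μ) (hR : 0 < R) :
    ∫ t in Ioi (0 : ℝ), rexp (-μ * t) * heatProfile b R t ≤
      (1 / 2 + 1 / (b - 1)) * R ^ (1 - b) := by
  have htail : ∫ t in Ioi R, rexp (-μ * t) * heatProfile b R t ≤ R ^ (1 - b) / (b - 1) := by
    calc ∫ t in Ioi R, rexp (-μ * t) * heatProfile b R t
        ≤ ∫ t in Ioi R, t ^ (-b) :=
          setIntegral_mono_on
            ((integrableOn_exp_neg_mul_heatProfile hμ hR).mono_set (Ioi_subset_Ioi hR.le))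
            (integrableOn_Ioi_rpow_of_lt (by linarith) hR) measurableSet_Ioi fun t ht ↦
              (exp_neg_mul_heatProfile_le_self hμ.le hR.le (hR.trans ht).le).trans
                (min_le_right _ _)
      _ = R ^ (1 - b) / (b - 1) := by
          rw [integral_Ioi_rpow_of_lt (by linarith) hR, neg_add_eq_sub, neg_div, ← div_neg, neg_sub]
  linear_combination laplace_heatProfile_le_add_integral_Ioi (b := b) hμ hR + htail

lemma laplace_heatProfile_one_le (hμ : 0 < μ) (hR : 0 < R) :
    ∫ t in Ioi (0 : ℝ), rexp (-μ * t) * heatProfile 1 R t ≤ 5 / 2 * max 1 (log (μ⁻¹ * R⁻¹)) := by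
  have htail : ∫ t in Ioi R, rexp (-μ * t) * heatProfile 1 R t ≤ log⁺ (μ⁻¹ * R⁻¹) + 1 := by
    refine (setIntegral_mono_on
      ((integrableOn_exp_neg_mul_heatProfile hμ hR).mono_set (Ioi_subset_Ioi hR.le))
      (integrableOn_exp_neg_mul_inv hμ hR) measurableSet_Ioi fun t _ ↦ ?_).trans
        (integral_exp_neg_mul_inv_le hμ hR)
    exact rpow_neg_one t ▸ exp_neg_mul_heatProfile_le_rpow 1 μ R t
  have hsplit := laplace_heatProfile_le_add_integral_Ioi (b := 1) hμ hR
  rw [sub_self, rpow_zero] at hsplit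
  have hposLog : log⁺ (μ⁻¹ * R⁻¹) ≤ max 1 (log (μ⁻¹ * R⁻¹)) := max_le_max_right _ zero_le_one
  linarith [le_max_left 1 (log (μ⁻¹ * R⁻¹))]

lemma laplace_heatProfile_le_of_lt_one (hb : b < 1) (hμ : 0 < μ) (hR : 0 < R) :
    ∫ t in Ioi (0 : ℝ), rexp (-μ * t) * heatProfile b R t ≤ Gamma (1 - b) * μ⁻¹ ^ (1 - b) := by
  have hp : -1 < -b := neg_lt_neg hb
  rw [← neg_add_eq_sub b 1, ← integral_exp_neg_mul_mul_rpow_Ioi hp hμ]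
  exact setIntegral_mono_on (integrableOn_exp_neg_mul_heatProfile hμ hR)
    (integrableOn_exp_neg_mul_mul_rpow_Ioi hp hμ) measurableSet_Ioi
    fun t _ ↦ exp_neg_mul_heatProfile_le_rpow b μ R t

lemma resolventNearProfile_nonneg (hR : 0 ≤ R) (hs : 0 ≤ s) : 0 ≤ resolventNearProfile b R s := by
  unfold resolventNearProfile
  split_ifs <;> positivity

lemma exists_laplace_heatProfile_le_resolventNearProfile (b : ℝ) :
    ∃ C : ℝ, ∀ μ > 0, ∀ R > 0,
      ∫ t in Ioi (0 : ℝ), rexp (-μ * t) * heatProfile b R t ≤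
        C * resolventNearProfile b R μ⁻¹ := by
  unfold resolventNearProfile
  rcases lt_trichotomy b 1 with hb | rfl | hb
  · simp only [hb.not_gt, hb.ne, if_false]
    exact ⟨_, fun μ hμ R hR ↦ laplace_heatProfile_le_of_lt_one hb hμ hR⟩
  · simp only [lt_irrefl, if_false, if_true]
    exact ⟨_, fun μ hμ R hR ↦ laplace_heatProfile_one_le hμ hR⟩
  · simp only [hb, if_true]
    exact ⟨_, fun μ hμ R hR ↦ laplace_heatProfile_le_of_one_lt hb hμ hR⟩

theorem exists_laplace_heatProfile_le_resolventProfile (b : ℝ) :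
    ∃ C > 0, ∀ μ > 0, ∀ R > 0,
      ∫ t in Ioi (0 : ℝ), rexp (-μ * t) * heatProfile b R t ≤ C * resolventProfile b R μ⁻¹ := by
  obtain ⟨C, hC⟩ := exists_laplace_heatProfile_le_resolventNearProfile b
  refine ⟨max C 1, by positivity, fun μ hμ R hR ↦ ?_⟩
  refine le_max_mul_min (resolventNearProfile_nonneg hR.le (by positivity)) (by positivity)
    (hC μ hμ R hR) ?_
  rw [one_mul]
  exact laplace_heatProfile_le_sq hμ hR

end LaplaceProfile

section RadialVariables

variable {n : ℕ} {α : ℝ}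

lemma rpow_rpow_neg_div_sub_one {r c : ℝ} (hr : 0 ≤ r) (hc : c ≠ 0) (d : ℝ) :
    (r ^ c) ^ (-(d / c) - 1) = r ^ (-d - c) := by
  rw [← rpow_mul hr]
  congr 1
  field_simp

lemma Ifun_eq_heatProfile {x : EuclideanSpace ℝ (Fin n)} (hα : α ≠ 0) (hx : x ≠ 0) (t : ℝ) :
    Ifun n α t x = heatProfile (n / (2 * α)) (‖x‖ ^ (2 * α)) t := by
  rw [Ifun, if_neg hx, heatProfile, neg_div, neg_add',
    rpow_rpow_neg_div_sub_one (norm_nonneg x) (by positivity)]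

lemma Jfun_eq_resolventProfile (hα : 0 < α) (s : ℝ) (x : EuclideanSpace ℝ (Fin n)) :
    Jfun n α s x = resolventProfile (n / (2 * α)) (‖x‖ ^ (2 * α)) s := by
  have h2α : 0 < 2 * α := by positivity
  rw [Jfun, resolventProfile, resolventNearProfile,
    rpow_rpow_neg_div_sub_one (norm_nonneg x) h2α.ne']
  simp only [one_lt_div h2α, div_eq_one_iff_eq h2α.ne', eq_comm (a := (n : ℝ))]
  split_ifs with hlt heq
  · rw [← rpow_mul (norm_nonneg x)]
    congr 2
    field_simp
  · rw [← rpow_neg (norm_nonneg x), heq]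
    ring_nf
  · rfl

end RadialVariables

/-- there is `C₂ > 0` depending only on `n` and `α` such that for every `μ > 0`
and every `x ≠ 0`, `∫₀^∞ e^{-μ t} I(t,x) dt ≤ C₂ J(μ^{-1}, x)`. -/
theorem laplace_transform_I_le_J (n : ℕ) (hn : 1 ≤ n) (α : ℝ) (hα : 0 < α) :
    ∃ C₂ > (0 : ℝ), ∀ μ : ℝ, 0 < μ → ∀ x : EuclideanSpace ℝ (Fin n), x ≠ 0 →
      ∫ t in Set.Ioi (0 : ℝ), Real.exp (-μ * t) * Ifun n α t x ≤ C₂ * Jfun n α μ⁻¹ x := by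
  obtain ⟨C, hC, hle⟩ := exists_laplace_heatProfile_le_resolventProfile (n / (2 * α))
  refine ⟨C, hC, fun μ hμ x hx ↦ ?_⟩
  simp only [Ifun_eq_heatProfile hα.ne' hx, Jfun_eq_resolventProfile hα]
  exact hle μ hμ _ (rpow_pos_of_pos (norm_pos_iff.2 hx) _)
end
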